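/- Let a, c ∈ ℝ with a ≠ 0, and let σ > 0. Then the complex eigenvalues of the real 2×2 matrix M = [[0, −a], [a, 2cσ²]] are λ_{1/2} = cσ² ± √(c²σ⁴ − a²) (where the square root of a negative real number is taken in ℂ). If in addition c < 0, then both eigenvalues of M have strictly negative real part. -/

import Mathlib

open Matrix

section SpectrumCardEqTwo

variable {K n : Type*} [Field K] [Fintype n] [DecidableEq n] {A : Matrix n n K}

theorem mem_spectrum_iff_of_card_eq_two (hn : Fintype.card n = 2) {x : K} :
    x ∈ spectrum K A ↔ x ^ 2 - A.trace * x + A.det = 0 := by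
  simp only [mem_spectrum_iff_isRoot_charpoly, charpoly_of_card_eq_two A hn,
    Polynomial.IsRoot.def, Polynomial.eval_add, Polynomial.eval_sub, Polynomial.eval_mul,
    Polynomial.eval_pow, Polynomial.eval_X, Polynomial.eval_C]

theorem spectrum_eq_pair_of_card_eq_two (hn : Fintype.card n = 2) {s z : K}
    (htrace : A.trace = 2 * s) (hz : z ^ 2 = s ^ 2 - A.det) :
    spectrum K A = {s + z, s - z} := by
  ext x
  have factorization : x ^ 2 - A.trace * x + A.det = (x - (s + z)) * (x - (s - z)) := by
    linear_combination -x * htrace + hz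
  rw [mem_spectrum_iff_of_card_eq_two hn, factorization, mul_eq_zero, sub_eq_zero, sub_eq_zero,
    Set.mem_insert_iff, Set.mem_singleton_iff]

end SpectrumCardEqTwo

theorem re_neg_of_sq_sub_mul_add_eq_zero {t d : ℝ} (ht : t < 0) (hd : 0 < d) {x : ℂ}
    (hx : x ^ 2 - t * x + d = 0) : x.re < 0 := by
  have x_ne_zero : x ≠ 0 := by
    rintro rfl
    simp [hd.ne'] at hx
  have normSq_pos : 0 < Complex.normSq x := Complex.normSq_pos.mpr x_ne_zero
  -- Multiplying by the conjugate of `x` avoids a case split into real and non-real roots.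
  have conj_mul_eq_zero :
      (Complex.normSq x : ℂ) * x - t * Complex.normSq x + d * starRingEnd ℂ x = 0 := by
    rw [Complex.normSq_eq_conj_mul_self]
    linear_combination starRingEnd ℂ x * hx
  have re_eq_zero : Complex.normSq x * x.re - t * Complex.normSq x + d * x.re = 0 := by
    simpa using congrArg Complex.re conj_mul_eq_zero
  have mul_re_neg : (Complex.normSq x + d) * x.re < 0 :=
    calc (Complex.normSq x + d) * x.re = t * Complex.normSq x := by linear_combination re_eq_zero
      _ < 0 := mul_neg_of_neg_of_pos ht normSq_pos
  exact neg_of_mul_neg_right mul_re_neg (add_pos normSq_pos hd).le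

section RealMatrix

variable {n : Type*} [Fintype n]

theorem trace_map_ofReal (A : Matrix n n ℝ) : (A.map Complex.ofReal).trace = A.trace :=
  (AddMonoidHom.map_trace Complex.ofRealHom A).symm

variable [DecidableEq n]

theorem det_map_ofReal (A : Matrix n n ℝ) : (A.map Complex.ofReal).det = A.det :=
  (Complex.ofRealHom.map_det A).symm

theorem re_neg_of_trace_neg_of_det_pos (hn : Fintype.card n = 2) {A : Matrix n n ℝ}
    (htrace : A.trace < 0) (hdet : 0 < A.det) {x : ℂ}
    (hx : x ∈ spectrum ℂ (A.map Complex.ofReal)) : x.re < 0 := by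
  rw [mem_spectrum_iff_of_card_eq_two hn, trace_map_ofReal, det_map_ofReal] at hx
  exact re_neg_of_sq_sub_mul_add_eq_zero htrace hdet hx

end RealMatrix

/-- The complex eigenvalues of `M = [[0, −a], [a, 2cσ²]]` (with `a ≠ 0`, `σ > 0`) are
`cσ² ± √(c²σ⁴ − a²)` (square root taken in `ℂ`); if moreover `c < 0`, both eigenvalues
have strictly negative real part. This is the Jacobian of the Dirac-GAN with instance
noise, with `a = f′(0)`, `c = f″(0)`. -/
theorem instance_noise_eigenvalues
    (a c σ : ℝ) (ha : a ≠ 0) (hσ : 0 < σ)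
    (M : Matrix (Fin 2) (Fin 2) ℝ) (hM : M = !![0, -a; a, 2 * c * σ ^ 2]) :
    (∃ z : ℂ, z ^ 2 = (Complex.ofReal c) ^ 2 * (Complex.ofReal σ) ^ 4
          - (Complex.ofReal a) ^ 2 ∧
      spectrum ℂ (M.map Complex.ofReal)
        = {Complex.ofReal (c * σ ^ 2) + z, Complex.ofReal (c * σ ^ 2) - z}) ∧
    (c < 0 → ∀ lam ∈ spectrum ℂ (M.map Complex.ofReal), lam.re < 0) := by
  have trace_eq : M.trace = 2 * (c * σ ^ 2) := by
    rw [hM, trace_fin_two_of]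
    ring
  have det_eq : M.det = a ^ 2 := by
    rw [hM, det_fin_two_of]
    ring
  constructor
  · obtain ⟨z, hz⟩ := IsAlgClosed.exists_pow_nat_eq
      ((c : ℂ) ^ 2 * (σ : ℂ) ^ 4 - (a : ℂ) ^ 2) two_pos
    refine ⟨z, hz, spectrum_eq_pair_of_card_eq_two (Fintype.card_fin 2) ?_ ?_⟩
    · rw [trace_map_ofReal, trace_eq, Complex.ofReal_mul, Complex.ofReal_ofNat]
    · rw [det_map_ofReal, det_eq, hz]
      push_cast
      ring
  · intro hc lam hlam
    have trace_neg : M.trace < 0 := by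
      rw [trace_eq]
      exact mul_neg_of_pos_of_neg two_pos (mul_neg_of_neg_of_pos hc (pow_pos hσ 2))
    have det_pos : 0 < M.det := det_eq ▸ sq_pos_of_ne_zero ha
    exact re_neg_of_trace_neg_of_det_pos (Fintype.card_fin 2) trace_neg det_pos hlam
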